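/- Let σ : A → A⁺ be a substitution such that (X_σ, T) is minimal and is not a single periodic orbit. Then σ is tame, and there exists a subset B ⊆ A with σ(b) ∈ B⁺ for every b ∈ B, such that the restriction σ_B : B → B⁺ is an l-primitive substitution and (X_{σ_B}, T) = (X_σ, T). -/

import Mathlib

/-!
Tameness. If a long letter `a` satisfies `σⁿ(a) = u a w` with `u` a nonempty word of short letters,
the iterates of `u` are bounded in length, hence eventually periodic, so the iterates of `a` contain
all powers of one word `v` (`powers_of_left`; `powers_of_right` is its mirror image). Then `X_σ`
contains `v^∞`, whose finite orbit is all of `X_σ` by minimality, contradicting the assumption that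
`X_σ` is not a single periodic orbit (`singlePeriodicOrbit_of_powers`).

Universal letter. By tameness each long letter eventually produces three long letters
(`exists_three_long`), so some iterate contains a long letter arbitrarily far from both ends. By
compactness, for each long `b` and each `p ≥ 1` the closed shift-invariant set of sequences whose
factors occur in the words `σ^{pk}(b)`, `k ≥ 1`, has a point with a long letter at `0`
(`exists_long_point`), and by minimality that set is `X_σ` (`letterSubshift_eq`). Hence there is one
long letter `c` that occurs in `σ^{pk}(b)`, for some `k ≥ 1`, for all long `b` and all `p ≥ 1`
(`exists_universal_letter`).

The set `B`. Let `B` be the set of letters reachable from `c`. Every long letter reaches `c`. The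
freedom in `p` excludes a nontrivial period, so `c` occurs in `σⁿ(c)` for all large `n`
(`eventually_return`). Therefore `σ_B` is `l`-primitive. The words `σᵏ(c)` are words over `B` and
already generate `X_σ`, so `σ_B` has the same subshift.
-/

namespace SubstMin

variable {A : Type*}

/-- Apply a map `σ : A → A⁺` to a word by concatenation. -/
def substW (σ : A → List A) (w : List A) : List A := w.flatMap σ

/-- `n`-th iterate of the substitution applied to a word. -/
def substIter (σ : A → List A) (n : ℕ) (w : List A) : List A := (substW σ)^[n] w

/-- The set `A_l` of letters `a` with `|σⁿ(a)| → ∞`. -/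
def longLetters (σ : A → List A) : Set A :=
  {a | Filter.Tendsto (fun n => (substIter σ n [a]).length) Filter.atTop Filter.atTop}

/-- The set `A_s = A \ A_l`. -/
def shortLetters (σ : A → List A) : Set A := (longLetters σ)ᶜ

/-- `σ` is a substitution: letters map to nonempty words and `A_l ≠ ∅`. -/
def IsSubstitution (σ : A → List A) : Prop :=
  (∀ a, σ a ≠ []) ∧ (longLetters σ).Nonempty

/-- The language `L(σ)`: factors of some `σⁿ(a)`, `n ≥ 1`. -/
def lang (σ : A → List A) : Set (List A) :=
  {w | ∃ (a : A) (n : ℕ), 1 ≤ n ∧ w <:+: substIter σ n [a]}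

/-- The finite factor `x[s,t]` of a bi-infinite sequence. -/
def factorOf (x : ℤ → A) (s t : ℤ) : List A :=
  (List.range (t - s + 1).toNat).map fun i => x (s + (i : ℤ))

/-- The substitution dynamical system `X_σ`. -/
def XSub (σ : A → List A) : Set (ℤ → A) :=
  {x | ∀ s t : ℤ, s ≤ t → factorOf x s t ∈ lang σ}

/-- The left shift `T`. -/
def shiftT (x : ℤ → A) : ℤ → A := fun i => x (i + 1)

/-- A subshift is minimal if it is nonempty and has no nonempty proper closed
shift-invariant subset. -/
def IsMinimalSubshift [TopologicalSpace A] (X : Set (ℤ → A)) : Prop :=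
  X.Nonempty ∧ ∀ Y : Set (ℤ → A), Y ⊆ X → Y.Nonempty → IsClosed Y →
    shiftT '' Y = Y → Y = X

/-- `a ∈ A_l` is left isolated: `σⁿ(a) = u a w` with `u ∈ A_s⁺`, `w ∈ A*`. -/
def LeftIsolated (σ : A → List A) (a : A) : Prop :=
  ∃ n : ℕ, 1 ≤ n ∧ ∃ u w : List A, u ≠ [] ∧ (∀ b ∈ u, b ∈ shortLetters σ) ∧
    substIter σ n [a] = u ++ a :: w

/-- `a ∈ A_l` is right isolated: `σᵐ(a) = w a u` with `u ∈ A_s⁺`, `w ∈ A*`. -/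
def RightIsolated (σ : A → List A) (a : A) : Prop :=
  ∃ n : ℕ, 1 ≤ n ∧ ∃ u w : List A, u ≠ [] ∧ (∀ b ∈ u, b ∈ shortLetters σ) ∧
    substIter σ n [a] = w ++ a :: u

/-- `σ` is tame: no letter of `A_l` is left or right isolated. -/
def Tame (σ : A → List A) : Prop :=
  ∀ a ∈ longLetters σ, ¬ LeftIsolated σ a ∧ ¬ RightIsolated σ a

/-- `σ` is `l`-primitive. -/
def LPrimitive (σ : A → List A) : Prop :=
  ∃ n : ℕ, 1 ≤ n ∧ ∀ a ∈ longLetters σ, ∀ b ∈ longLetters σ, a ∈ substIter σ n [b]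

/-- `a → b` : `b` occurs in `σⁿ(a)` for some `n ≥ 1`. -/
def arrow (σ : A → List A) (a b : A) : Prop :=
  ∃ n : ℕ, 1 ≤ n ∧ b ∈ substIter σ n [a]

/-- `A_{∘,l} = {a ∈ A_l | a → a}`. -/
def circLong (σ : A → List A) : Set A := {a | a ∈ longLetters σ ∧ arrow σ a a}

/-- `A_{min,l}`: letters of `A_l` minimal in `A_l`. -/
def minLong (σ : A → List A) : Set A :=
  {a | a ∈ longLetters σ ∧ ∀ b ∈ longLetters σ, arrow σ a b → arrow σ b a}

/-- `x` is a periodic point of the shift. -/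
def IsPeriodicPoint (x : ℤ → A) : Prop := ∃ p : ℕ, 1 ≤ p ∧ shiftT^[p] x = x

/-- `X` is a single periodic orbit. -/
def IsSinglePeriodicOrbit (X : Set (ℤ → A)) : Prop :=
  ∃ x : ℤ → A, IsPeriodicPoint x ∧ X = Set.range fun i : ℤ => fun j => x (j + i)

/-- `y = σ(x)` : `y` is obtained from `x` by applying `σ` to each coordinate and
concatenating, with `σ(x(0))` placed starting at coordinate `0`. -/
def IsSubstImage (σ : A → List A) (x y : ℤ → A) : Prop :=
  ∃ o : ℤ → ℤ, o 0 = 0 ∧ (∀ i : ℤ, o (i + 1) = o i + (σ (x i)).length) ∧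
    ∀ i : ℤ, factorOf y (o i) (o (i + 1) - 1) = σ (x i)

/-- The map `s` on nonempty subsets of `A_l`: `s(F) = ⋃_{a ∈ F} (Lett(σ(a)) ∩ A_l)`. -/
def sMap (σ : A → List A) (F : Set A) : Set A :=
  {b | b ∈ longLetters σ ∧ ∃ a ∈ F, b ∈ σ a}

end SubstMin

namespace SubstMin

/-! ### Iterates of words, long and short letters -/

section Words

variable {A : Type*} {σ : A → List A}

lemma substIter_succ' (n : ℕ) (w : List A) :
    substIter σ (n + 1) w = substIter σ n (substW σ w) := rfl

lemma substIter_add (m n : ℕ) (w : List A) :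
    substIter σ (m + n) w = substIter σ m (substIter σ n w) :=
  Function.iterate_add_apply _ _ _ _

lemma substIter_append (n : ℕ) (v w : List A) :
    substIter σ n (v ++ w) = substIter σ n v ++ substIter σ n w := by
  induction n generalizing v w with
  | zero => rfl
  | succ n ih => simp only [substIter_succ', substW, List.flatMap_append, ih]

lemma substIter_cons (n : ℕ) (a : A) (w : List A) :
    substIter σ n (a :: w) = substIter σ n [a] ++ substIter σ n w :=
  substIter_append n [a] w

lemma substIter_nil (n : ℕ) : substIter σ n ([] : List A) = [] := by
  induction n with
  | zero => rfl
  | succ n ih => exact ih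

lemma infix_substIter (n : ℕ) {v w : List A} (h : v <:+: w) :
    substIter σ n v <:+: substIter σ n w := by
  obtain ⟨s, t, rfl⟩ := h
  exact ⟨substIter σ n s, substIter σ n t, by simp [substIter_append]⟩

lemma infix_of_mem {a : A} {w : List A} (h : a ∈ w) : [a] <:+: w := by
  obtain ⟨s, t, rfl⟩ := List.append_of_mem h
  exact ⟨s, t, by simp⟩

lemma substIter_mem_trans {m n : ℕ} {a b c : A} (h₁ : b ∈ substIter σ n [a])
    (h₂ : c ∈ substIter σ m [b]) : c ∈ substIter σ (m + n) [a] := by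
  rw [substIter_add]
  exact (infix_substIter m (infix_of_mem h₁)).subset h₂

lemma length_le_substW (hσ : ∀ a, σ a ≠ []) (w : List A) :
    w.length ≤ (substW σ w).length := by
  induction w with
  | nil => simp
  | cons a w ih =>
    have := List.length_pos_of_ne_nil (hσ a)
    simp only [substW, List.flatMap_cons, List.length_append, List.length_cons] at ih ⊢
    omega

lemma length_mono (hσ : ∀ a, σ a ≠ []) (w : List A) :
    Monotone fun n => (substIter σ n w).length := by
  refine monotone_nat_of_le_succ fun n => ?_
  rw [Nat.add_comm n 1, substIter_add]
  exact length_le_substW hσ _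

lemma substIter_ne_nil (hσ : ∀ a, σ a ≠ []) (n : ℕ) {w : List A} (hw : w ≠ []) :
    substIter σ n w ≠ [] := by
  have h : (substIter σ 0 w).length ≤ (substIter σ n w).length := length_mono hσ w (Nat.zero_le n)
  have := List.length_pos_of_ne_nil hw
  exact List.ne_nil_of_length_pos (this.trans_le h)

/-- Since `σ` is non-erasing, lengths are monotone, so a letter that is not long has bounded
iterates; hence so does every word of short letters. -/
lemma bounded_of_short (hσ : ∀ a, σ a ≠ []) {w : List A} (hw : ∀ a ∈ w, a ∈ shortLetters σ) :
    ∃ C, ∀ n, (substIter σ n w).length ≤ C := by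
  induction w with
  | nil => exact ⟨0, fun n => by simp [substIter_nil]⟩
  | cons a w ih =>
    obtain ⟨C, hC⟩ := ih fun b hb => hw b (List.mem_cons_of_mem _ hb)
    have ha : ¬ Filter.Tendsto (fun n => (substIter σ n [a]).length) Filter.atTop Filter.atTop :=
      hw a List.mem_cons_self
    obtain ⟨D, hD⟩ : BddAbove (Set.range fun n => (substIter σ n [a]).length) := by
      by_contra h
      exact ha (Filter.tendsto_atTop_atTop_of_monotone' (length_mono hσ _) h)
    refine ⟨D + C, fun n => ?_⟩
    rw [substIter_cons, List.length_append]
    exact Nat.add_le_add (hD ⟨n, rfl⟩) (hC n)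

lemma exists_long_mem (hσ : ∀ a, σ a ≠ []) {b : A} (hb : b ∈ longLetters σ) (n : ℕ) :
    ∃ d ∈ longLetters σ, d ∈ substIter σ n [b] := by
  by_contra! h
  obtain ⟨C, hC⟩ := bounded_of_short hσ (w := substIter σ n [b]) fun a ha ha' => h a ha' ha
  obtain ⟨k, hk, hk'⟩ := ((Filter.tendsto_atTop.1 hb (C + 1)).and
    (Filter.eventually_ge_atTop n)).exists
  have := hC (k - n)
  rw [← substIter_add, Nat.sub_add_cancel hk'] at this
  omega

lemma eventually_length_ge {d : A} (hd : d ∈ longLetters σ) {w : List A} (hw : d ∈ w) (N : ℕ) :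
    ∀ᶠ n in Filter.atTop, N ≤ (substIter σ n w).length :=
  (Filter.tendsto_atTop.1 hd N).mono fun n hn =>
    hn.trans (infix_substIter n (infix_of_mem hw)).length_le

end Words

/-! ### Powers produced by isolated letters -/

section Tameness

variable {A : Type*} {σ : A → List A}

/-- If `σⁿ(a)` begins with `u a` where the iterates of `u` have bounded length, the iterates of
`u` are eventually periodic. Passing to a power `σ^Q` that is idempotent on the prefix, each
application prepends the same word `v`, so iterates of `a` contain arbitrary powers of `v`. -/
lemma powers_of_left [Finite A] (hσ : ∀ a, σ a ≠ []) {a : A} {n : ℕ} (hn : 1 ≤ n)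
    {u w : List A} (hu : u ≠ []) {C : ℕ} (hC : ∀ n, (substIter σ n u).length ≤ C)
    (h : substIter σ n [a] = u ++ a :: w) :
    ∃ v : List A, v ≠ [] ∧ ∀ m, ∃ k, 1 ≤ k ∧
      (List.replicate m v).flatten <:+: substIter σ k [a] := by
  have : Finite {l : List A | l.length ≤ C} := List.finite_length_le A C
  obtain ⟨i, j, hij, hfij⟩ := Finite.exists_ne_map_eq_of_infinite
    (fun i : ℕ => (⟨substIter σ (n * i) u, hC _⟩ : {l : List A | l.length ≤ C}))
  obtain ⟨i, p, hp, hip⟩ : ∃ i p : ℕ, 1 ≤ p ∧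
      substIter σ (n * (i + p)) u = substIter σ (n * i) u := by
    have he : substIter σ (n * i) u = substIter σ (n * j) u := congrArg Subtype.val hfij
    rcases Nat.lt_or_gt_of_ne hij with hlt | hlt
    · exact ⟨i, j - i, by omega, by rw [Nat.add_sub_of_le hlt.le, he]⟩
    · exact ⟨j, i - j, by omega, by rw [Nat.add_sub_of_le hlt.le, he]⟩
  have hper : ∀ k t : ℕ, substIter σ (n * (i + t + p * k)) u = substIter σ (n * (i + t)) u := by
    intro k
    induction k with
    | zero => simp
    | succ k ih =>
      intro t
      have : n * (i + t + p * (k + 1)) = n * (t + p * k) + n * (i + p) := by ring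
      rw [this, substIter_add, hip, ← substIter_add, ← ih t]
      congr 1; ring
  -- a multiple of the period that is also past the preperiod
  obtain ⟨q, hq, hqu⟩ : ∃ q, 1 ≤ q ∧ substIter σ (n * q + n * q) u = substIter σ (n * q) u := by
    refine ⟨p * (i + 1), Nat.mul_pos hp (Nat.succ_pos i), ?_⟩
    have hle : i ≤ p * (i + 1) := by nlinarith
    have := hper (i + 1) (p * (i + 1) - i)
    rw [Nat.add_sub_of_le hle] at this
    rw [← this]; congr 1; ring
  set Q := n * q with hQ
  have hQ1 : 1 ≤ Q := Nat.mul_pos hn hq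
  have key : ∀ k, ∃ U W : List A, U ≠ [] ∧ substIter σ (Q + Q) U = substIter σ Q U ∧
      substIter σ (n * (k + 1)) [a] = U ++ a :: W := by
    intro k
    induction k with
    | zero => exact ⟨u, w, hu, hqu, by simpa using h⟩
    | succ k ih =>
      obtain ⟨U, W, hU, hU', hUW⟩ := ih
      refine ⟨substIter σ (n * (k + 1)) u ++ U, W ++ substIter σ (n * (k + 1)) w,
        by simp [hU], ?_, ?_⟩
      · rw [substIter_append, substIter_append, hU', ← substIter_add, ← substIter_add,
          Nat.add_comm, substIter_add, hqu, ← substIter_add, Nat.add_comm Q]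
      · rw [Nat.mul_add n (k + 1) 1, substIter_add, Nat.mul_one, h, substIter_append,
          substIter_cons, hUW]
        simp
  obtain ⟨U, W, hU, hU', hUW⟩ := key (q - 1)
  rw [Nat.sub_add_cancel hq, ← hQ] at hUW
  have hconst : ∀ m, substIter σ (Q * (m + 1)) U = substIter σ Q U := by
    intro m
    induction m with
    | zero => simp
    | succ m ih => rw [Nat.mul_add Q (m + 1) 1, Nat.add_comm, substIter_add, ih,
        ← substIter_add, Nat.mul_one, hU']
  refine ⟨substIter σ Q U, substIter_ne_nil hσ Q hU, fun m =>
    ⟨Q * (m + 1), Nat.mul_pos hQ1 (Nat.succ_pos m), ?_⟩⟩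
  refine List.IsPrefix.isInfix ?_
  induction m with
  | zero => simp
  | succ m ih =>
    rw [Nat.mul_add Q (m + 1) 1, substIter_add, Nat.mul_one, hUW, substIter_append,
      substIter_cons, hconst, List.replicate_succ, List.flatten_cons,
      List.prefix_append_right_inj]
    exact ih.trans (List.prefix_append _ _)

lemma substIter_reverse (n : ℕ) (w : List A) :
    substIter (fun a => (σ a).reverse) n w.reverse = (substIter σ n w).reverse := by
  induction n generalizing w with
  | zero => rfl
  | succ n ih =>
    rw [substIter_succ', substIter_succ', ← ih]
    congr 1
    simp only [substW, List.reverse_flatMap]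
    rfl

lemma reverse_flatten_replicate (m : ℕ) (v : List A) :
    (List.replicate m v).flatten.reverse = (List.replicate m v.reverse).flatten := by
  simp [List.reverse_flatten]

/-- The mirror image of `powers_of_left`, obtained by reversing all words. -/
lemma powers_of_right [Finite A] (hσ : ∀ a, σ a ≠ []) {a : A} {n : ℕ} (hn : 1 ≤ n)
    {u w : List A} (hu : u ≠ []) {C : ℕ} (hC : ∀ n, (substIter σ n u).length ≤ C)
    (h : substIter σ n [a] = w ++ a :: u) :
    ∃ v : List A, v ≠ [] ∧ ∀ m, ∃ k, 1 ≤ k ∧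
      (List.replicate m v).flatten <:+: substIter σ k [a] := by
  obtain ⟨v, hv, H⟩ := powers_of_left (σ := fun a => (σ a).reverse) (a := a) (n := n)
    (u := u.reverse) (w := w.reverse) (C := C) (by simpa using hσ) hn (by simpa using hu)
    (fun n => by rw [substIter_reverse, List.length_reverse]; exact hC n)
    (by
      have := substIter_reverse (σ := σ) n [a]
      rw [h] at this
      simpa using this)
  refine ⟨v.reverse, by simpa using hv, fun m => ?_⟩
  obtain ⟨k, hk, hk'⟩ := H m
  refine ⟨k, hk, ?_⟩
  have := substIter_reverse (σ := σ) k [a]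
  rw [List.reverse_singleton] at this
  rwa [this, ← List.reverse_infix, List.reverse_reverse, reverse_flatten_replicate] at hk'

end Tameness

/-! ### Long letters multiply under tameness -/

section LongLetters

variable {A : Type*} {σ : A → List A}

/-- Under tameness every long letter eventually produces two long letters. Otherwise every
`σⁿ(b)` would contain exactly one, which recurs by pigeonhole: `σᵐ(d) = u d v` with `u`, `v`
short, so `u = v = ε` by tameness and the iterates of `d` would stay bounded. -/
lemma exists_two_long [Finite A] (hσ : ∀ a, σ a ≠ []) (ht : Tame σ) {b : A}
    (hb : b ∈ longLetters σ) :
    ∃ (n : ℕ) (u v w : List A) (d e : A), d ∈ longLetters σ ∧ e ∈ longLetters σ ∧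
      substIter σ n [b] = u ++ d :: (v ++ e :: w) := by
  by_contra! H
  have one : ∀ n, ∃ d u v, d ∈ longLetters σ ∧ (∀ x ∈ u, x ∈ shortLetters σ) ∧
      (∀ x ∈ v, x ∈ shortLetters σ) ∧ substIter σ n [b] = u ++ d :: v := by
    intro n
    obtain ⟨d, hd, hdn⟩ := exists_long_mem hσ hb n
    obtain ⟨u, v, huv⟩ := List.append_of_mem hdn
    refine ⟨d, u, v, hd, fun x hx hxl => ?_, fun x hx hxl => ?_, huv⟩
    · obtain ⟨u₁, u₂, rfl⟩ := List.append_of_mem hx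
      exact H n u₁ u₂ v x d hxl hd (by simpa using huv)
    · obtain ⟨v₁, v₂, rfl⟩ := List.append_of_mem hx
      exact H n u v₁ v₂ d x hd hxl huv
  choose d u v hd hu hv huv using one
  obtain ⟨i, m, hm, him⟩ : ∃ i m : ℕ, 1 ≤ m ∧ d (m + i) = d i := by
    obtain ⟨i, j, hij, he⟩ := Finite.exists_ne_map_eq_of_infinite d
    rcases Nat.lt_or_gt_of_ne hij with hlt | hlt
    · exact ⟨i, j - i, by omega, by rw [Nat.sub_add_cancel hlt.le, he]⟩
    · exact ⟨j, i - j, by omega, by rw [Nat.sub_add_cancel hlt.le, he]⟩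
  obtain ⟨e, he, hem⟩ := exists_long_mem hσ (hd i) m
  obtain ⟨u', v', huv'⟩ := List.append_of_mem hem
  have hj : substIter σ (m + i) [b] =
      substIter σ m (u i) ++ u' ++ e :: (v' ++ substIter σ m (v i)) := by
    rw [substIter_add, huv, substIter_append, substIter_cons, huv']
    simp
  have hed : e = d i := by
    have : e ∈ substIter σ (m + i) [b] := by rw [hj]; simp
    rw [huv, him] at this
    rcases List.mem_append.1 this with h | h
    · exact absurd he (hu _ _ h)
    · rcases List.mem_cons.1 h with h | h
      · exact h
      · exact absurd he (hv _ _ h)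
  have hu' : u' = [] := by
    by_contra hne
    refine (ht _ (hd i)).1 ⟨m, hm, u', v', hne, fun x hx hxl => ?_, hed ▸ huv'⟩
    obtain ⟨u₁, u₂, rfl⟩ := List.append_of_mem hx
    exact H (m + i) (substIter σ m (u i) ++ u₁) u₂ (v' ++ substIter σ m (v i)) x e hxl he
      (by rw [hj]; simp)
  have hv' : v' = [] := by
    by_contra hne
    refine (ht _ (hd i)).2 ⟨m, hm, v', u', hne, fun x hx hxl => ?_, hed ▸ huv'⟩
    obtain ⟨v₁, v₂, rfl⟩ := List.append_of_mem hx
    exact H (m + i) (substIter σ m (u i) ++ u') v₁ (v₂ ++ substIter σ m (v i)) e x he hxl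
      (by rw [hj]; simp)
  have hfix : substIter σ m [d i] = [d i] := by rw [huv', hu', hv', hed]; rfl
  have hfix' : ∀ k, substIter σ (m * k) [d i] = [d i] := by
    intro k
    induction k with
    | zero => rfl
    | succ k ih => rw [Nat.mul_succ, substIter_add, hfix, ih]
  obtain ⟨N, hN⟩ := Filter.eventually_atTop.1 (Filter.tendsto_atTop.1 (hd i) 2)
  have := hN (m * N) (Nat.le_mul_of_pos_left N hm)
  rw [hfix'] at this
  simp at this

/-- Under tameness every long letter eventually produces a long letter with further long letters
on both sides. -/
lemma exists_three_long [Finite A] (hσ : ∀ a, σ a ≠ []) (ht : Tame σ) {b : A}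
    (hb : b ∈ longLetters σ) :
    ∃ (n : ℕ) (u v : List A) (d : A), d ∈ longLetters σ ∧ (∃ e ∈ longLetters σ, e ∈ u) ∧
      (∃ e ∈ longLetters σ, e ∈ v) ∧ substIter σ n [b] = u ++ d :: v := by
  obtain ⟨n, u, v, w, d, d', hd, hd', h⟩ := exists_two_long hσ ht hb
  obtain ⟨m, u₁, v₁, w₁, e, e', he, he', h₁⟩ := exists_two_long hσ ht hd
  obtain ⟨f, hf, hfm⟩ := exists_long_mem hσ hd' m
  refine ⟨m + n, substIter σ m u ++ u₁ ++ e :: v₁,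
    w₁ ++ substIter σ m v ++ substIter σ m [d'] ++ substIter σ m w, e', he',
    ⟨e, he, by simp⟩, ⟨f, hf, by simp [hfm]⟩, ?_⟩
  rw [substIter_add, h, substIter_append, substIter_cons, substIter_append,
    substIter_cons m d', h₁]
  simp

end LongLetters

/-! ### Points of the subshift -/

section Points

variable {A : Type*} {σ : A → List A}

/-- The factor of length `n` of a bi-infinite sequence starting at coordinate `s`; unlike
`factorOf` it is parametrized by length and may be empty. -/
def seg (x : ℤ → A) (s : ℤ) (n : ℕ) : List A := (List.range n).map fun i : ℕ => x (s + (i : ℤ))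

@[simp] lemma length_seg (x : ℤ → A) (s : ℤ) (n : ℕ) : (seg x s n).length = n := by simp [seg]

lemma seg_add (x : ℤ → A) (s : ℤ) (m n : ℕ) :
    seg x s (m + n) = seg x s m ++ seg x (s + m) n := by
  simp only [seg, List.range_add, List.map_append, List.map_map]
  congr 1
  refine List.map_congr_left fun i _ => ?_
  simp [add_assoc]

lemma seg_shiftT (x : ℤ → A) (s : ℤ) (n : ℕ) : seg (shiftT x) s n = seg x (s + 1) n :=
  List.map_congr_left fun i _ => by simp only [shiftT]; congr 1; ring

lemma seg_translate (x : ℤ → A) (t s : ℤ) (n : ℕ) :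
    seg (fun j => x (j + t)) s n = seg x (s + t) n :=
  List.map_congr_left fun i _ => by rw [add_right_comm]

lemma factorOf_eq_seg (x : ℤ → A) (s t : ℤ) : factorOf x s t = seg x s (t - s + 1).toNat := by
  simp only [factorOf, seg, List.bind_eq_flatMap, List.pure_def, List.map_flatMap,
    List.map_cons, List.map_nil]
  exact List.map_eq_flatMap.symm

lemma mem_XSub_iff (x : ℤ → A) : x ∈ XSub σ ↔ ∀ s n, seg x s n ∈ lang σ := by
  constructor
  · intro h s n
    rcases Nat.eq_zero_or_pos n with rfl | hn
    · obtain ⟨a, k, hk, -⟩ := h 0 0 le_rfl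
      exact ⟨a, k, hk, List.nil_prefix.isInfix⟩
    · have := h s (s + n - 1) (by omega)
      have e : (s + n - 1 - s + 1).toNat = n := by omega
      rwa [factorOf_eq_seg, e] at this
  · intro h s t _
    rw [factorOf_eq_seg]
    exact h s _

/-- Compactness: if an infix-closed language contains words with a letter of `P` arbitrarily far
from both ends, it contains all factors of some bi-infinite sequence with a letter of `P` at `0`.
The sequence is the ultralimit of the words, each centred at such a letter. -/
lemma exists_point [Finite A] (ℒ : Set (List A)) (hℒ : ∀ v w, w ∈ ℒ → v <:+: w → v ∈ ℒ)
    (P : Set A) (h : ∀ N : ℕ, ∃ (u : List A) (e : A) (v : List A), e ∈ P ∧ N ≤ u.length ∧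
      N ≤ v.length ∧ u ++ e :: v ∈ ℒ) :
    ∃ x : ℤ → A, x 0 ∈ P ∧ ∀ s n, seg x s n ∈ ℒ := by
  choose u e v heP hu hv hW using h
  let y : ℕ → ℤ → A := fun N i =>
    (u N ++ e N :: v N).getD (i + ((u N).length : ℤ)).toNat (e N)
  have hlim : ∀ i, ∃ a, ∀ᶠ N in (Filter.hyperfilter ℕ : Filter ℕ), y N i = a := fun i =>
    Ultrafilter.eventually_exists_iff.1 (Filter.Eventually.of_forall fun N => ⟨_, rfl⟩)
  choose x hx using hlim
  refine ⟨x, ?_, fun s n => ?_⟩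
  · obtain ⟨N, hN⟩ := (hx 0).exists
    rw [← hN]
    simpa [y] using heP N
  · have h1 : ∀ᶠ N in (Filter.hyperfilter ℕ : Filter ℕ), ∀ i ∈ Finset.range n,
        y N (s + (i : ℤ)) = x (s + (i : ℤ)) :=
      (Filter.eventually_all_finset _).2 fun i _ => hx _
    obtain ⟨N, hN, hN'⟩ := (h1.and (Nat.hyperfilter_le_atTop
      (Filter.eventually_ge_atTop (s.natAbs + n)))).exists
    refine hℒ _ _ (hW N) ?_
    have hseg : seg x s n =
        ((u N ++ e N :: v N).drop (s + ((u N).length : ℤ)).toNat).take n := by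
      have := hu N
      have := hv N
      have hN'' : s.natAbs + n ≤ N := hN'
      refine List.ext_getElem ?_ fun i h₁ h₂ => ?_
      · simp only [length_seg, List.length_take, List.length_drop, List.length_append,
          List.length_cons]
        omega
      · have hi : i < n := by simpa using h₁
        have hidx : (s + (i : ℤ) + ((u N).length : ℤ)).toNat
            = (s + ((u N).length : ℤ)).toNat + i := by omega
        have hlt : (s + ((u N).length : ℤ)).toNat + i < (u N ++ e N :: v N).length := by
          simp only [List.length_append, List.length_cons]; omega
        simp only [seg, List.getElem_map, List.getElem_range, List.getElem_take,
          List.getElem_drop]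
        rw [← hN i (Finset.mem_range.2 hi)]
        simp only [y]
        rw [hidx, List.getD_eq_getElem _ _ hlt]
    rw [hseg]
    exact (List.take_prefix _ _).isInfix.trans (List.drop_suffix _ _).isInfix

/-- If the language contains all powers of a nonempty word `v`, then `X_σ` contains the periodic
sequence `v^∞`, whose orbit is finite, hence closed, hence everything by minimality. -/
lemma singlePeriodicOrbit_of_powers [TopologicalSpace A] [DiscreteTopology A]
    (hmin : IsMinimalSubshift (XSub σ)) {v : List A} (hv : v ≠ [])
    (h : ∀ m, (List.replicate m v).flatten ∈ lang σ) : IsSinglePeriodicOrbit (XSub σ) := by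
  have hL : 0 < v.length := List.length_pos_of_ne_nil hv
  have hL' : (0 : ℤ) < (v.length : ℤ) := by exact_mod_cast hL
  set L := v.length with hLdef
  let x : ℤ → A := fun i => v.getD (i % (L : ℤ)).toNat (v.head hv)
  have hx : ∀ i k : ℤ, x (i + L * k) = x i := fun i k => by simp [x]
  have hseg : ∀ s k : ℤ, ∀ n, seg x (s + L * k) n = seg x s n := fun s k n =>
    List.map_congr_left fun i _ => by
      rw [show s + (L : ℤ) * k + (i : ℤ) = s + i + L * k by ring, hx]
  have hv0 : seg x 0 L = v := by
    refine List.ext_getElem (by simp [hLdef]) fun i h₁ h₂ => ?_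
    have : ((i : ℤ) % (L : ℤ)).toNat = i := by
      rw [Int.emod_eq_of_lt (by omega) (by omega)]; simp
    simp [seg, x, this, h₂]
  have hpow : ∀ m, seg x 0 (L * m) = (List.replicate m v).flatten := by
    intro m
    induction m with
    | zero => simp [seg]
    | succ m ih =>
      rw [Nat.mul_succ, Nat.add_comm, seg_add, hv0, List.replicate_succ, List.flatten_cons, ← ih]
      simpa using hseg 0 1 (L * m)
  have hxX : ∀ t : ℤ, (fun j => x (j + t)) ∈ XSub σ := by
    intro t
    rw [mem_XSub_iff]
    intro s n
    rw [seg_translate]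
    have hr := Int.emod_nonneg (s + t) hL'.ne'
    obtain ⟨r, hr'⟩ := Int.eq_ofNat_of_zero_le hr
    have h1 : seg x (s + t) n = seg x (r : ℤ) n := by
      rw [← hseg r ((s + t) / L) n, ← hr', Int.emod_add_mul_ediv]
    have hle : r + n ≤ L * (r + n) := Nat.le_mul_of_pos_left _ hL
    obtain ⟨d, hd⟩ := Nat.exists_eq_add_of_le hle
    have h2 : seg x (r : ℤ) n <:+: (List.replicate (r + n) v).flatten := by
      rw [← hpow, hd, seg_add, seg_add]
      exact ⟨seg x 0 r, seg x (0 + ((r + n : ℕ) : ℤ)) d, by simp⟩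
    obtain ⟨a, k, hk, hinf⟩ := h (r + n)
    exact ⟨a, k, hk, h1 ▸ h2.trans hinf⟩
  have hfin : (Set.range fun i : ℤ => fun j => x (j + i)).Finite := by
    refine ((Finset.range L).finite_toSet.image fun r : ℕ => fun j => x (j + (r : ℤ))).subset ?_
    rintro _ ⟨i, rfl⟩
    have h0 := Int.emod_nonneg i hL'.ne'
    have h1 := Int.emod_lt_of_pos i hL'
    refine ⟨(i % L).toNat, by simp; omega, funext fun j => ?_⟩
    have : j + i = j + ((i % (L : ℤ)).toNat : ℤ) + L * (i / L) := by
      rw [Int.toNat_of_nonneg h0, add_assoc, Int.emod_add_mul_ediv]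
    simp only [this, hx]
  have hiter : ∀ n : ℕ, ∀ i, shiftT^[n] x i = x (i + n) := by
    intro n
    induction n with
    | zero => simp
    | succ n ih =>
      intro i
      rw [Function.iterate_succ_apply', shiftT, ih]
      congr 1; push_cast; ring
  refine ⟨x, ⟨L, hL, funext fun i => ?_⟩,
    (hmin.2 _ ?_ (Set.range_nonempty _) hfin.isClosed ?_).symm⟩
  · rw [hiter]; simpa using hx i 1
  · rintro _ ⟨t, rfl⟩; exact hxX t
  · ext y
    constructor
    · rintro ⟨_, ⟨t, rfl⟩, rfl⟩
      exact ⟨t + 1, funext fun j => by simp only [shiftT]; congr 1; ring⟩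
    · rintro ⟨t, rfl⟩
      exact ⟨_, ⟨t - 1, rfl⟩, funext fun j => by simp only [shiftT]; congr 1; ring⟩

/-- Minimality without periodicity forces tameness: an isolated letter would put all powers of
some word into the language. -/
lemma tame_of_minimal [Finite A] [TopologicalSpace A] [DiscreteTopology A]
    (hσ : ∀ a, σ a ≠ []) (hmin : IsMinimalSubshift (XSub σ))
    (hnp : ¬ IsSinglePeriodicOrbit (XSub σ)) : Tame σ := by
  refine fun a _ => ⟨?_, ?_⟩
  · rintro ⟨n, hn, u, w, hu, hus, h⟩
    obtain ⟨C, hC⟩ := bounded_of_short hσ hus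
    obtain ⟨v, hv, H⟩ := powers_of_left hσ hn hu hC h
    exact hnp (singlePeriodicOrbit_of_powers hmin hv fun m => ⟨a, H m⟩)
  · rintro ⟨n, hn, u, w, hu, hus, h⟩
    obtain ⟨C, hC⟩ := bounded_of_short hσ hus
    obtain ⟨v, hv, H⟩ := powers_of_right hσ hn hu hC h
    exact hnp (singlePeriodicOrbit_of_powers hmin hv fun m => ⟨a, H m⟩)

/-- The subshift of sequences all of whose factors occur in some `σ^{pk}(b)`, `k ≥ 1`. -/
def letterSubshift (σ : A → List A) (b : A) (p : ℕ) : Set (ℤ → A) :=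
  {x | ∀ s n, ∃ k, 1 ≤ k ∧ seg x s n <:+: substIter σ (p * k) [b]}

lemma exists_long_point [Finite A] (hσ : ∀ a, σ a ≠ []) (ht : Tame σ) {b : A}
    (hb : b ∈ longLetters σ) {p : ℕ} (hp : 1 ≤ p) :
    ∃ x ∈ letterSubshift σ b p, x 0 ∈ longLetters σ := by
  suffices h : ∀ N : ℕ, ∃ (u : List A) (e : A) (v : List A), e ∈ longLetters σ ∧
      N ≤ u.length ∧ N ≤ v.length ∧
      u ++ e :: v ∈ {w : List A | ∃ k, 1 ≤ k ∧ w <:+: substIter σ (p * k) [b]} by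
    obtain ⟨x, hx0, hx⟩ := exists_point
      {w : List A | ∃ k, 1 ≤ k ∧ w <:+: substIter σ (p * k) [b]}
      (fun v w ⟨k, hk, hw⟩ hv => ⟨k, hk, hv.trans hw⟩) (longLetters σ) h
    exact ⟨x, hx, hx0⟩
  intro N
  obtain ⟨n, u, v, d, hd, ⟨f, hf, hfu⟩, ⟨g, hg, hgv⟩, h⟩ := exists_three_long hσ ht hb
  obtain ⟨M, hM⟩ := Filter.eventually_atTop.1
    ((eventually_length_ge hf hfu N).and (eventually_length_ge hg hgv N))
  -- an iterate of `σⁿ(b)` whose total exponent is a multiple of `p`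
  obtain ⟨m, k, hk, hm, hmk⟩ : ∃ m k : ℕ, 1 ≤ k ∧ M ≤ m ∧ p * k = m + n := by
    have : n + M + 1 ≤ p * (n + M + 1) := Nat.le_mul_of_pos_left _ hp
    exact ⟨p * (n + M + 1) - n, n + M + 1, by omega, by omega, by omega⟩
  obtain ⟨e, he, hem⟩ := exists_long_mem hσ hd m
  obtain ⟨u', v', huv'⟩ := List.append_of_mem hem
  obtain ⟨h1, h2⟩ := hM m hm
  refine ⟨substIter σ m u ++ u', e, v' ++ substIter σ m v, he, ?_, ?_, k, hk, ?_⟩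
  · rw [List.length_append]; omega
  · rw [List.length_append]; omega
  · rw [hmk, substIter_add, h, substIter_append, substIter_cons, huv']
    simp

/-- For every long letter `b` and every `p ≥ 1`, the iterates `σ^{pk}(b)` already generate all
of `X_σ`. -/
lemma letterSubshift_eq [Finite A] [TopologicalSpace A] [DiscreteTopology A]
    (hσ : ∀ a, σ a ≠ []) (ht : Tame σ) (hmin : IsMinimalSubshift (XSub σ)) {b : A}
    (hb : b ∈ longLetters σ) {p : ℕ} (hp : 1 ≤ p) : letterSubshift σ b p = XSub σ := by
  refine hmin.2 _ (fun x hx => ?_) ?_ ?_ ?_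
  · rw [mem_XSub_iff]
    intro s n
    obtain ⟨k, hk, hi⟩ := hx s n
    exact ⟨b, p * k, Nat.mul_pos hp hk, hi⟩
  · obtain ⟨x, hx, -⟩ := exists_long_point hσ ht hb hp
    exact ⟨x, hx⟩
  · simp only [letterSubshift, Set.ofPred_forall]
    refine isClosed_iInter fun s => isClosed_iInter fun n => ?_
    have hc : Continuous fun x : ℤ → A => fun i : Fin n => x (s + ((i : ℕ) : ℤ)) := by fun_prop
    have he : ∀ x : ℤ → A, seg x s n = List.ofFn fun i : Fin n => x (s + ((i : ℕ) : ℤ)) :=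
      fun x => List.ext_getElem (by simp) fun i _ _ => by simp [seg]
    simp only [he]
    exact (isClosed_discrete {f : Fin n → A | ∃ k, 1 ≤ k ∧
      List.ofFn f <:+: substIter σ (p * k) [b]}).preimage hc
  · ext y
    constructor
    · rintro ⟨x, hx, rfl⟩ s n
      rw [seg_shiftT]; exact hx _ _
    · intro hy
      refine ⟨fun j => y (j + (-1)), fun s n => ?_, funext fun j => by simp [shiftT]⟩
      rw [seg_translate]; exact hy _ _

/-- Some long letter `c` occurs in `σ^{pk}(b)` for every long `b` and every `p ≥ 1`. -/
lemma exists_universal_letter [Finite A] [TopologicalSpace A] [DiscreteTopology A]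
    (hσ : IsSubstitution σ) (ht : Tame σ) (hmin : IsMinimalSubshift (XSub σ)) :
    ∃ c ∈ longLetters σ, ∀ b ∈ longLetters σ, ∀ p, 1 ≤ p →
      ∃ k, 1 ≤ k ∧ c ∈ substIter σ (p * k) [b] := by
  obtain ⟨b₀, hb₀⟩ := hσ.2
  obtain ⟨x, hx, hx0⟩ := exists_long_point hσ.1 ht hb₀ le_rfl
  rw [letterSubshift_eq hσ.1 ht hmin hb₀ le_rfl] at hx
  refine ⟨x 0, hx0, fun b hb p hp => ?_⟩
  rw [← letterSubshift_eq hσ.1 ht hmin hb hp] at hx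
  obtain ⟨k, hk, hi⟩ := hx 0 1
  exact ⟨k, hk, hi.subset (by simp [seg])⟩

/-- The return times of `c` form an additive semigroup. For a return time `q`, looking for `c` in
`σ^{qk}` of a long letter of `σ(c)` shows that both `q k` and `q k + 1` are return times for some
`k ≥ 1`, hence so are all large integers. -/
lemma eventually_return (hσ : ∀ a, σ a ≠ []) {c : A} (hc : c ∈ longLetters σ)
    (huniv : ∀ b ∈ longLetters σ, ∀ p, 1 ≤ p → ∃ k, 1 ≤ k ∧ c ∈ substIter σ (p * k) [b]) :
    ∃ M, ∀ n, M ≤ n → c ∈ substIter σ n [c] := by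
  obtain ⟨q, hq, hqc⟩ := huniv c hc 1 le_rfl
  rw [Nat.one_mul] at hqc
  obtain ⟨d, hd, hdc⟩ := exists_long_mem hσ hc 1
  obtain ⟨k, hk, hkd⟩ := huniv d hd q hq
  have hmul : ∀ r, c ∈ substIter σ r [c] → ∀ i, c ∈ substIter σ (r * i) [c] := by
    intro r hr i
    induction i with
    | zero => exact List.mem_singleton_self c
    | succ i ih => exact substIter_mem_trans hr ih
  have h0 := hmul q hqc k
  have h1 : c ∈ substIter σ (q * k + 1) [c] := substIter_mem_trans hdc hkd
  set m := q * k with hm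
  have hm1 : 1 ≤ m := Nat.mul_pos hq hk
  refine ⟨m * m, fun n hn => ?_⟩
  -- `n = m (n / m - n % m) + (m + 1) (n % m)`, where `n % m < m ≤ n / m`
  have hle : m ≤ n / m := (Nat.le_div_iff_mul_le hm1).2 hn
  have hlt := Nat.mod_lt n hm1
  obtain ⟨t, ht⟩ := Nat.exists_eq_add_of_le (hlt.le.trans hle)
  have hn' : n = m * t + (m + 1) * (n % m) := by
    conv_lhs => rw [← Nat.div_add_mod n m, ht]
    ring
  rw [hn']
  exact substIter_mem_trans (hmul _ h1 _) (hmul _ h0 _)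

end Points

/-! ### Restriction to an invariant set of letters -/

section Restriction

variable {A : Type*} {σ : A → List A} {B : Set A} {τ : B → List B}

lemma map_substIter (hτ : ∀ b : B, (τ b).map Subtype.val = σ b.val) (n : ℕ) (w : List B) :
    (substIter τ n w).map Subtype.val = substIter σ n (w.map Subtype.val) := by
  induction n generalizing w with
  | zero => rfl
  | succ n ih =>
    rw [substIter_succ', substIter_succ', ih]
    congr 1
    simp only [substW, List.map_flatMap, List.flatMap_map, hτ]

lemma mem_longLetters_restrict (hτ : ∀ b : B, (τ b).map Subtype.val = σ b.val) (b : B) :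
    b ∈ longLetters τ ↔ (b : A) ∈ longLetters σ := by
  have : ∀ n, (substIter τ n [b]).length = (substIter σ n [(b : A)]).length := fun n => by
    rw [← List.length_map Subtype.val, map_substIter hτ]; rfl
  simp only [longLetters, Set.mem_ofPred_eq, this]

lemma mem_substIter_restrict (hτ : ∀ b : B, (τ b).map Subtype.val = σ b.val) (n : ℕ) (a b : B) :
    a ∈ substIter τ n [b] ↔ (a : A) ∈ substIter σ n [(b : A)] := by
  have := map_substIter hτ n [b]
  rw [List.map_singleton] at this
  rw [← this, List.mem_map_of_injective Subtype.val_injective]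

lemma map_seg (y : ℤ → B) (s : ℤ) (n : ℕ) :
    (seg y s n).map Subtype.val = seg (fun i => (y i : A)) s n := by
  simp [seg, Function.comp_def]

end Restriction

end SubstMin

/-! ### Tameness and the l-primitive restriction -/

/-- If `(X_σ, T)` is minimal and not a single periodic orbit, then `σ`
is tame, and there is `B ⊆ A`, closed under `σ`, whose restricted substitution is
`l`-primitive and gives the same subshift. -/
theorem statement1 {A : Type*} [Fintype A] [TopologicalSpace A] [DiscreteTopology A]
    (σ : A → List A) (hσ : SubstMin.IsSubstitution σ)
    (hmin : SubstMin.IsMinimalSubshift (SubstMin.XSub σ))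
    (hnp : ¬ SubstMin.IsSinglePeriodicOrbit (SubstMin.XSub σ)) :
    SubstMin.Tame σ ∧
      ∃ (B : Set A) (τ : B → List B),
        (∀ b : B, (τ b).map Subtype.val = σ b.val) ∧
        SubstMin.IsSubstitution τ ∧ SubstMin.LPrimitive τ ∧
        (fun (y : ℤ → B) (i : ℤ) => (y i : A)) '' SubstMin.XSub τ = SubstMin.XSub σ := by
  classical
  have ht : SubstMin.Tame σ := SubstMin.tame_of_minimal hσ.1 hmin hnp
  obtain ⟨c, hc, huniv⟩ := SubstMin.exists_universal_letter hσ ht hmin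
  obtain ⟨M, hM⟩ := SubstMin.eventually_return hσ.1 hc huniv
  refine ⟨ht, {b | ∃ k, b ∈ SubstMin.substIter σ k [c]}, ?_⟩
  set B : Set A := {b | ∃ k, b ∈ SubstMin.substIter σ k [c]} with hB
  have hcB : c ∈ B := ⟨0, List.mem_singleton_self c⟩
  have hclosed : ∀ b ∈ B, ∀ a ∈ σ b, a ∈ B := by
    rintro b ⟨k, hk⟩ a ha
    refine ⟨1 + k, SubstMin.substIter_mem_trans hk ?_⟩
    simpa [SubstMin.substIter, SubstMin.substW] using ha
  refine ⟨fun b => (σ b).attachWith (· ∈ B) (hclosed b b.2), ?_⟩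
  set τ : B → List B := fun b => (σ b).attachWith (· ∈ B) (hclosed b b.2) with hτdef
  have hτ : ∀ b : B, (τ b).map Subtype.val = σ b.val := fun b => by simp [hτdef]
  have hcτ : (⟨c, hcB⟩ : B) ∈ SubstMin.longLetters τ :=
    (SubstMin.mem_longLetters_restrict hτ _).2 hc
  refine ⟨hτ, ⟨fun b h => hσ.1 b ?_, _, hcτ⟩, ?_, ?_⟩
  · rw [← hτ b, h]; rfl
  · -- a long `b` reaches `c`, which returns at all large times and then reaches `a`
    have hev : ∀ a b : B, ∀ᶠ n in Filter.atTop, b ∈ SubstMin.longLetters τ →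
        a ∈ SubstMin.substIter τ n [b] := by
      intro a b
      by_cases hb : b ∈ SubstMin.longLetters τ
      · obtain ⟨i, hi⟩ := a.2
        obtain ⟨k, -, hk⟩ := huniv b ((SubstMin.mem_longLetters_restrict hτ b).1 hb) 1 le_rfl
        filter_upwards [Filter.eventually_ge_atTop (i + M + 1 * k)] with n hn _
        rw [SubstMin.mem_substIter_restrict hτ]
        have hn' : n = i + (n - i - 1 * k) + 1 * k := by omega
        rw [hn']
        exact SubstMin.substIter_mem_trans hk
          (SubstMin.substIter_mem_trans (hM _ (by omega)) hi)
      · exact Filter.Eventually.of_forall fun n h => absurd h hb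
    obtain ⟨n, hn, hn1⟩ := ((Filter.eventually_all.2 fun a => Filter.eventually_all.2 (hev a)).and
      (Filter.eventually_ge_atTop 1)).exists
    exact ⟨n, hn1, fun a _ b hb => hn a b hb⟩
  · ext x
    constructor
    · rintro ⟨y, hy, rfl⟩
      rw [SubstMin.mem_XSub_iff] at hy ⊢
      intro s n
      obtain ⟨b, k, hk, hi⟩ := hy s n
      have := hi.map Subtype.val
      rw [SubstMin.map_substIter hτ, SubstMin.map_seg] at this
      exact ⟨b, k, hk, this⟩
    · intro hx
      rw [← SubstMin.letterSubshift_eq hσ.1 ht hmin hc le_rfl] at hx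
      have hxB : ∀ i, x i ∈ B := fun i => by
        obtain ⟨k, -, hi⟩ := hx i 1
        exact ⟨1 * k, hi.subset (by simp [SubstMin.seg])⟩
      refine ⟨fun i => ⟨x i, hxB i⟩, ?_, rfl⟩
      rw [SubstMin.mem_XSub_iff]
      intro s n
      obtain ⟨k, hk, hi⟩ := hx s n
      refine ⟨⟨c, hcB⟩, 1 * k, by omega, ?_⟩
      have hmap := SubstMin.map_substIter hτ (1 * k) [⟨c, hcB⟩]
      rw [List.map_singleton] at hmap
      rw [← hmap, List.infix_map_iff] at hi
      obtain ⟨w, hw, hwx⟩ := hi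
      rw [← SubstMin.map_seg (fun i => (⟨x i, hxB i⟩ : B)) s n] at hwx
      rwa [List.map_injective_iff.2 Subtype.val_injective hwx]
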